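/- For all a ∈ A and h ∈ H one has β̄(a · τ(h)) = a₍₀₎ ⊗ a₍₁₎ S(h) in A ⊗ H. Equivalently, the braiding conjugated by the canonical map is given by (can ∘ σ ∘ can⁻¹)(a ⊗ h) = a₍₀₎ ⊗ a₍₁₎ S(h). (This is the key computational identity underlying Lemma 3.2 and the invertibility of σ.) -/

import Mathlib

/-!
Both claims follow from the single identity `βbar = Φ ∘ can`, where `Φ (a ⊗ h) = a₍₀₎ ⊗ a₍₁₎ S(h)`.
On the class of `a ⊗ a'` it reads
`Φ (a a'₍₀₎ ⊗ a'₍₁₎) = δ a * (a'₍₀₎ ⊗ a'₍₁₎ S(a'₍₂₎)) = δ a * (a' ⊗ 1) = β (a ⊗ a')`,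
by multiplicativity of `δ`, coassociativity, the antipode axiom and counitality
(`Phi_delta`, `Phi_ctilde`). For the first claim one also needs that `can` is left `A`-linear,
so that `can (a · τ h) = a ⊗ h`.
-/

open TensorProduct

noncomputable section

variable {k H A : Type*} [Field k] [Ring H] [HopfAlgebra k H] [Ring A] [Algebra k A]

/-- The lifted canonical map `c̃ : A ⊗ A → A ⊗ H`, `c̃(a ⊗ a') = a a'₍₀₎ ⊗ a'₍₁₎`,
for a coaction `δ : A → A ⊗ H`. -/
def ctilde (δ : A →ₐ[k] A ⊗[k] H) : A ⊗[k] A →ₗ[k] A ⊗[k] H :=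
  (TensorProduct.map (LinearMap.mul' k A) LinearMap.id)
    ∘ₗ (TensorProduct.assoc k A A H).symm.toLinearMap
    ∘ₗ (TensorProduct.map LinearMap.id δ.toLinearMap)

/-- The map `β : A ⊗ A → A ⊗ H`, `β(a ⊗ a') = a₍₀₎a' ⊗ a₍₁₎`. -/
def betaMap (δ : A →ₐ[k] A ⊗[k] H) : A ⊗[k] A →ₗ[k] A ⊗[k] H :=
  (TensorProduct.map (LinearMap.mul' k A) LinearMap.id)
    ∘ₗ (TensorProduct.assoc k A A H).symm.toLinearMap
    ∘ₗ (TensorProduct.map LinearMap.id (TensorProduct.comm k H A).toLinearMap)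
    ∘ₗ (TensorProduct.assoc k A H A).toLinearMap
    ∘ₗ (TensorProduct.map δ.toLinearMap LinearMap.id)

/-- The diagonal coaction `δ₂ : A ⊗ A → (A ⊗ A) ⊗ H`,
`δ₂(a ⊗ a') = (a₍₀₎ ⊗ a'₍₀₎) ⊗ a₍₁₎a'₍₁₎`. -/
def delta2 (δ : A →ₐ[k] A ⊗[k] H) : A ⊗[k] A →ₗ[k] (A ⊗[k] A) ⊗[k] H :=
  (TensorProduct.map LinearMap.id (LinearMap.mul' k H))
    ∘ₗ (TensorProduct.tensorTensorTensorComm k A H A H).toLinearMap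
    ∘ₗ (TensorProduct.map δ.toLinearMap δ.toLinearMap)

/-- `J ⊆ A ⊗ A`: the k-span of the balanced relations `ab ⊗ a' − a ⊗ ba'`
with `b` a coinvariant element (`δ b = b ⊗ 1`). -/
def Jrel (δ : A →ₐ[k] A ⊗[k] H) : Submodule k (A ⊗[k] A) :=
  Submodule.span k {x | ∃ a a' b : A, δ b = b ⊗ₜ[k] (1 : H) ∧
    x = (a * b) ⊗ₜ[k] a' - a ⊗ₜ[k] (b * a')}

/-- `A ⊗ I`: the k-span of `{a ⊗ x : a ∈ A, x ∈ I}` inside `A ⊗ H`. -/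
def AtI (A : Type*) [Ring A] [Algebra k A] (I : Submodule k H) :
    Submodule k (A ⊗[k] H) :=
  Submodule.span k {z | ∃ a : A, ∃ h ∈ I, z = a ⊗ₜ[k] h}

/-- Counitality of the coaction `δ` : `(id ⊗ ε) ∘ δ = id` under `A ⊗ k ≅ A`. -/
def Counital (δ : A →ₐ[k] A ⊗[k] H) : Prop :=
  ∀ a : A, (TensorProduct.rid k A)
    (TensorProduct.map LinearMap.id (Coalgebra.counit (R := k) (A := H)) (δ a)) = a

/-- Coassociativity of the coaction `δ` : `(δ ⊗ id) ∘ δ = (id ⊗ Δ) ∘ δ`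
up to the tensor associator. -/
def Coassoc (δ : A →ₐ[k] A ⊗[k] H) : Prop :=
  ∀ a : A, (TensorProduct.assoc k A H H)
      (TensorProduct.map δ.toLinearMap LinearMap.id (δ a))
    = TensorProduct.map LinearMap.id (Coalgebra.comul (R := k) (A := H)) (δ a)

/-- The `σ`-closure `⟨W⟩_σ = Σ_{n ≥ 0} σⁿ(W)` of a subspace `W`. -/
def sclosure {M : Type*} [AddCommGroup M] [Module k M]
    (σ : M →ₗ[k] M) (W : Submodule k M) : Submodule k M :=
  ⨆ n : ℕ, Submodule.map (σ ^ n) W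

/-- The map `Φ : A ⊗ H → A ⊗ H`, `Φ (a ⊗ h) = a₍₀₎ ⊗ a₍₁₎ S(h)`. It is the braiding transported
to `A ⊗ H` along the canonical map. -/
def Phi (δ : A →ₐ[k] A ⊗[k] H) : A ⊗[k] H →ₗ[k] A ⊗[k] H :=
  (TensorProduct.map LinearMap.id
      (LinearMap.mul' k H ∘ₗ (HopfAlgebra.antipode k (A := H)).lTensor H))
    ∘ₗ (TensorProduct.assoc k A H H).toLinearMap
    ∘ₗ (TensorProduct.map δ.toLinearMap LinearMap.id)

theorem Phi_tmul (δ : A →ₐ[k] A ⊗[k] H) (a : A) (h : H) :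
    Phi δ (a ⊗ₜ[k] h) = TensorProduct.map LinearMap.id
      (LinearMap.mulRight k (HopfAlgebra.antipode (R := k) h)) (δ a) := by
  simp only [Phi, LinearMap.comp_apply, TensorProduct.map_tmul, AlgHom.toLinearMap_apply,
    LinearMap.id_apply, LinearEquiv.coe_coe]
  generalize δ a = z
  induction z using TensorProduct.induction_on with
  | zero => simp
  | tmul x y => simp
  | add x y hx hy => rw [TensorProduct.add_tmul, map_add, map_add, map_add, hx, hy]

theorem Phi_tmul_eq_mul (δ : A →ₐ[k] A ⊗[k] H) (a : A) (h : H) :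
    Phi δ (a ⊗ₜ[k] h) = δ a * ((1 : A) ⊗ₜ[k] HopfAlgebra.antipode k h) := by
  rw [Phi_tmul]
  generalize δ a = z
  induction z using TensorProduct.induction_on with
  | zero => simp
  | tmul x y => simp
  | add x y hx hy => rw [map_add, add_mul, hx, hy]

/-- `a₍₀₎ ⊗ a₍₁₎ S(a₍₂₎) = a ⊗ 1`. -/
theorem Phi_delta (δ : A →ₐ[k] A ⊗[k] H) (hcu : Counital δ) (hca : Coassoc δ) (a : A) :
    Phi δ (δ a) = a ⊗ₜ[k] (1 : H) := by
  simp only [Phi, LinearMap.comp_apply, LinearEquiv.coe_coe]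
  rw [hca a]
  conv_rhs => rw [← hcu a]
  generalize δ a = z
  induction z using TensorProduct.induction_on with
  | zero => simp
  | tmul x y =>
    simp [HopfAlgebra.mul_antipode_lTensor_comul_apply, Algebra.algebraMap_eq_smul_one,
      TensorProduct.smul_tmul]
  | add x y hx hy => simp only [map_add, hx, hy, TensorProduct.add_tmul]

theorem ctilde_tmul (δ : A →ₐ[k] A ⊗[k] H) (a a' : A) :
    ctilde δ (a ⊗ₜ[k] a') = (a ⊗ₜ[k] (1 : H)) * δ a' := by
  simp only [ctilde, LinearMap.comp_apply, TensorProduct.map_tmul, AlgHom.toLinearMap_apply,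
    LinearMap.id_apply, LinearEquiv.coe_coe]
  generalize δ a' = z
  induction z using TensorProduct.induction_on with
  | zero => simp
  | tmul x y => simp
  | add x y hx hy => rw [TensorProduct.tmul_add, map_add, map_add, mul_add, hx, hy]

theorem betaMap_tmul (δ : A →ₐ[k] A ⊗[k] H) (a a' : A) :
    betaMap δ (a ⊗ₜ[k] a') = δ a * (a' ⊗ₜ[k] (1 : H)) := by
  simp only [betaMap, LinearMap.comp_apply, TensorProduct.map_tmul, AlgHom.toLinearMap_apply,
    LinearMap.id_apply, LinearEquiv.coe_coe]
  generalize δ a = z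
  induction z using TensorProduct.induction_on with
  | zero => simp
  | tmul x y => simp
  | add x y hx hy => simp only [TensorProduct.add_tmul, map_add, add_mul, hx, hy]

theorem Phi_mul (δ : A →ₐ[k] A ⊗[k] H) (a : A) (z : A ⊗[k] H) :
    Phi δ ((a ⊗ₜ[k] (1 : H)) * z) = δ a * Phi δ z := by
  induction z using TensorProduct.induction_on with
  | zero => simp
  | tmul x y =>
    rw [Algebra.TensorProduct.tmul_mul_tmul, one_mul, Phi_tmul_eq_mul, Phi_tmul_eq_mul, map_mul,
      mul_assoc]
  | add x y hx hy => rw [mul_add, map_add, map_add, mul_add, hx, hy]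

theorem Phi_ctilde (δ : A →ₐ[k] A ⊗[k] H) (hcu : Counital δ) (hca : Coassoc δ)
    (x : A ⊗[k] A) : Phi δ (ctilde δ x) = betaMap δ x := by
  induction x using TensorProduct.induction_on with
  | zero => simp
  | tmul a a' => rw [ctilde_tmul, Phi_mul, Phi_delta δ hcu hca, betaMap_tmul]
  | add x y hx hy => rw [map_add, map_add, map_add, hx, hy]

/-- `β̄(a · τ(h)) = a₍₀₎ ⊗ a₍₁₎ S(h)`; equivalently
`(can ∘ σ ∘ can⁻¹)(a ⊗ h) = a₍₀₎ ⊗ a₍₁₎S(h)`. -/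
theorem stmt5 (δ : A →ₐ[k] A ⊗[k] H) (hcu : Counital δ) (hca : Coassoc δ)
    (can : ((A ⊗[k] A) ⧸ Jrel δ) →ₗ[k] A ⊗[k] H)
    (hcan : ∀ x : A ⊗[k] A, can ((Jrel δ).mkQ x) = ctilde δ x)
    (hbij : Function.Bijective can)
    (βbar : ((A ⊗[k] A) ⧸ Jrel δ) →ₗ[k] A ⊗[k] H)
    (hβ : ∀ x : A ⊗[k] A, βbar ((Jrel δ).mkQ x) = betaMap δ x)
    (σ : ((A ⊗[k] A) ⧸ Jrel δ) →ₗ[k] (A ⊗[k] A) ⧸ Jrel δ)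
    (hσ : ∀ y : (A ⊗[k] A) ⧸ Jrel δ, can (σ y) = βbar y)
    (τ : H →ₗ[k] (A ⊗[k] A) ⧸ Jrel δ)
    (hτ : ∀ h : H, can (τ h) = (1 : A) ⊗ₜ[k] h)
    (act : A →ₗ[k] ((A ⊗[k] A) ⧸ Jrel δ) →ₗ[k] (A ⊗[k] A) ⧸ Jrel δ)
    (hact : ∀ c x y : A, act c ((Jrel δ).mkQ (x ⊗ₜ[k] y)) = (Jrel δ).mkQ ((c * x) ⊗ₜ[k] y)) :
    ∀ (a : A) (h : H),
      βbar (act a (τ h)) =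
        TensorProduct.map LinearMap.id
          (LinearMap.mulRight k (HopfAlgebra.antipode (R := k) h)) (δ a) ∧
      ∀ y : (A ⊗[k] A) ⧸ Jrel δ, can y = a ⊗ₜ[k] h →
        can (σ y) =
          TensorProduct.map LinearMap.id
            (LinearMap.mulRight k (HopfAlgebra.antipode (R := k) h)) (δ a) := by
  intro a h
  have key : ∀ y, βbar y = Phi δ (can y) := by
    intro y
    obtain ⟨x, rfl⟩ := (Jrel δ).mkQ_surjective y
    rw [hβ, hcan, Phi_ctilde δ hcu hca]
  have can_act : ∀ y, can (act a y) = (a ⊗ₜ[k] (1 : H)) * can y := by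
    intro y
    obtain ⟨x, rfl⟩ := (Jrel δ).mkQ_surjective y
    induction x using TensorProduct.induction_on with
    | zero => simp only [map_zero, mul_zero]
    | tmul x y =>
      rw [hact, hcan, hcan, ctilde_tmul, ctilde_tmul, ← mul_assoc,
        Algebra.TensorProduct.tmul_mul_tmul, one_mul]
    | add x y hx hy => simp only [map_add, mul_add, hx, hy]
  refine ⟨?_, fun y hy => ?_⟩
  · rw [key, can_act, hτ, Algebra.TensorProduct.tmul_mul_tmul, mul_one, one_mul, Phi_tmul]
  · rw [hσ, key, hy, Phi_tmul]

end
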